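/- Let T and S be bounded linear operators on H each admitting an A-adjoint. Then ω_A(T+S) ≤ (1/2) · [ ω_A(T) + ω_A(S) + sqrt( (ω_A(T) − ω_A(S))² + 4 · sup_{θ∈ℝ} ‖Re_A(e^{iθ}T) · Re_A(e^{iθ}S)‖_A ) ], and moreover this upper bound is at most ω_A(T) + ω_A(S). -/

import Mathlib

noncomputable section

open ContinuousLinearMap

variable {H : Type*} [NormedAddCommGroup H] [InnerProductSpace ℂ H] [CompleteSpace H]

/-- The semi-inner product induced by the positive operator `A`: `⟨x, y⟩_A := ⟨A x, y⟩`. -/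
def innA (A : H →L[ℂ] H) (x y : H) : ℂ := inner ℂ (A x) y

/-- The seminorm induced by `A`: `‖x‖_A := ⟨x, x⟩_A ^ (1/2)`. -/
def vnormA (A : H →L[ℂ] H) (x : H) : ℝ := Real.sqrt (innA A x x).re

/-- The `A`-operator seminorm: `‖T‖_A := sup {‖T x‖_A : ‖x‖_A = 1}`. -/
def opNormA (A T : H →L[ℂ] H) : ℝ :=
  sSup {c : ℝ | ∃ x : H, vnormA A x = 1 ∧ c = vnormA A (T x)}

/-- The `A`-numerical radius: `ω_A(T) := sup {|⟨T x, x⟩_A| : ‖x‖_A = 1}`. -/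
def wA (A T : H →L[ℂ] H) : ℝ :=
  sSup {c : ℝ | ∃ x : H, vnormA A x = 1 ∧ c = ‖innA A (T x) x‖}

/-- `T` admits an `A`-adjoint: there is a bounded operator `X` with `A X = T* A`. -/
def HasAAdjoint (A T : H →L[ℂ] H) : Prop :=
  ∃ X : H →L[ℂ] H, A ∘L X = adjoint T ∘L A

/-- `X` is the reduced `A`-adjoint `T^{♯_A}` of `T`: it solves `A X = T* A` and its range
is contained in the closure of the range of `A`. -/
def IsReducedAAdjoint (A T X : H →L[ℂ] H) : Prop :=
  (A ∘L X = adjoint T ∘L A) ∧ ∀ y : H, X y ∈ closure (Set.range A)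

/-- `Re_A(e^{iθ} T) := (e^{iθ} T + e^{-iθ} T^{♯_A}) / 2`. -/
def ReA (θ : ℝ) (T Tsharp : H →L[ℂ] H) : H →L[ℂ] H :=
  (2 : ℂ)⁻¹ • (Complex.exp ((θ : ℂ) * Complex.I) • T +
    Complex.exp (-(θ : ℂ) * Complex.I) • Tsharp)

/-!
Everything takes place in the semi-inner product space `(H, ⟨·, ·⟩_A)`, and one observation does
the work twice: if `R` is symmetric, the norms `‖R^[n] x‖` are log-convex in `n`, so
`‖R^[n] x‖ ≤ C * r ^ n` for all `n` forces `‖R x‖ ≤ r * ‖x‖`, whatever the constant `C`.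

* If `X` is an `A`-adjoint of `T`, then `X * T` is `A`-symmetric and `‖(X * T)^[n] x‖_A` is at most
  `√‖A‖ * ‖X * T‖ ^ n * ‖x‖`. Hence `X * T`, and with it `T`, is bounded for `‖·‖_A`.
* If `P + Q` is symmetric, then along its orbits the pair `(‖P y‖, ‖y‖)` grows no faster than under
  the matrix `!![‖P‖, ‖P * Q‖; 1, ‖Q‖]`, so `‖P + Q‖` is at most the largest eigenvalue
  `(‖P‖ + ‖Q‖ + √((‖P‖ - ‖Q‖) ^ 2 + 4 * ‖P * Q‖)) / 2`.

Apply the latter to `P = Re(e^{iθ} T)` and `Q = Re(e^{iθ} S)`, whose norms are at most `ω(T)` and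
`ω(S)`, and use `ω(T + S) = sup_θ ‖Re(e^{iθ} (T + S))‖`.
-/

open scoped InnerProductSpace

section LogConvex

variable {u : ℕ → ℝ}

theorem mul_le_mul_succ_of_sq_le_mul (hu : ∀ n, 0 ≤ u n)
    (hconv : ∀ n, u (n + 1) ^ 2 ≤ u n * u (n + 2)) (n : ℕ) : u 1 * u n ≤ u 0 * u (n + 1) := by
  induction n with
  | zero => exact (mul_comm _ _).le
  | succ n ih =>
    rcases (hu n).eq_or_lt with hzero | hpos
    · have hsucc : u (n + 1) = 0 := by
        have := hconv n
        rw [← hzero, zero_mul] at this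
        exact pow_eq_zero_iff two_ne_zero |>.1 (this.antisymm (sq_nonneg _))
      rw [hsucc, mul_zero]
      exact mul_nonneg (hu 0) (hu _)
    · refine le_of_mul_le_mul_left ?_ hpos
      calc u n * (u 1 * u (n + 1)) = u 1 * u n * u (n + 1) := by ring
        _ ≤ u 0 * u (n + 1) * u (n + 1) := mul_le_mul_of_nonneg_right ih (hu _)
        _ = u 0 * u (n + 1) ^ 2 := by ring
        _ ≤ u 0 * (u n * u (n + 2)) := mul_le_mul_of_nonneg_left (hconv n) (hu 0)
        _ = u n * (u 0 * u (n + 2)) := by ring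

theorem pow_mul_le_pow_mul_of_sq_le_mul (hu : ∀ n, 0 ≤ u n)
    (hconv : ∀ n, u (n + 1) ^ 2 ≤ u n * u (n + 2)) (n : ℕ) : u 1 ^ n * u 0 ≤ u 0 ^ n * u n := by
  induction n with
  | zero => exact le_rfl
  | succ n ih =>
    calc u 1 ^ (n + 1) * u 0 = u 1 * (u 1 ^ n * u 0) := by ring
      _ ≤ u 1 * (u 0 ^ n * u n) := mul_le_mul_of_nonneg_left ih (hu 1)
      _ = u 0 ^ n * (u 1 * u n) := by ring
      _ ≤ u 0 ^ n * (u 0 * u (n + 1)) :=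
        mul_le_mul_of_nonneg_left (mul_le_mul_succ_of_sq_le_mul hu hconv n) (pow_nonneg (hu 0) n)
      _ = u 0 ^ (n + 1) * u (n + 1) := by ring

theorem le_of_forall_pow_mul_le_mul_pow {a b c C : ℝ} (hb : 0 ≤ b) (hc : 0 < c)
    (h : ∀ n : ℕ, a ^ n * c ≤ C * b ^ n) : a ≤ b := by
  by_contra! hba
  have ha : 0 < a := hb.trans_lt hba
  have hlim : Filter.Tendsto (fun n : ℕ => C * (b / a) ^ n) Filter.atTop (nhds 0) := by
    simpa only [mul_zero] using (tendsto_pow_atTop_nhds_zero_of_lt_one (div_nonneg hb ha.le)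
      ((div_lt_one ha).2 hba)).const_mul C
  refine hc.not_ge (ge_of_tendsto' hlim fun n => ?_)
  rw [div_pow, ← mul_div_assoc, le_div_iff₀ (pow_pos ha n), mul_comm c]
  exact h n

theorem le_mul_of_sq_le_mul_of_le_mul_pow {C r : ℝ} (hu : ∀ n, 0 ≤ u n)
    (hconv : ∀ n, u (n + 1) ^ 2 ≤ u n * u (n + 2)) (hr : 0 ≤ r) (hC : ∀ n, u n ≤ C * r ^ n) :
    u 1 ≤ r * u 0 := by
  rcases (hu 0).eq_or_lt with hzero | hpos
  · have := hconv 0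
    rw [← hzero, zero_mul] at this
    rw [← hzero, mul_zero]
    exact (pow_eq_zero_iff two_ne_zero |>.1 (this.antisymm (sq_nonneg _))).le
  · refine le_of_forall_pow_mul_le_mul_pow (C := C) (mul_nonneg hr hpos.le) hpos fun n => ?_
    calc u 1 ^ n * u 0 ≤ u 0 ^ n * u n := pow_mul_le_pow_mul_of_sq_le_mul hu hconv n
      _ ≤ u 0 ^ n * (C * r ^ n) := mul_le_mul_of_nonneg_left (hC n) (pow_nonneg hpos.le n)
      _ = C * (r * u 0) ^ n := by rw [mul_pow]; ring

end LogConvex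

section Symmetric

variable {𝕜 E : Type*} [RCLike 𝕜] [SeminormedAddCommGroup E] [InnerProductSpace 𝕜 E]

theorem norm_apply_sq_le_of_isSymmetric {R : E →ₗ[𝕜] E} (hR : R.IsSymmetric) (x : E) :
    ‖R x‖ ^ 2 ≤ ‖x‖ * ‖R (R x)‖ :=
  calc ‖R x‖ ^ 2 = RCLike.re ⟪x, R (R x)⟫_𝕜 := by rw [← hR, inner_self_eq_norm_sq]
    _ ≤ ‖x‖ * ‖R (R x)‖ := re_inner_le_norm _ _

theorem norm_apply_le_of_norm_iterate_le {R : E →ₗ[𝕜] E} (hR : R.IsSymmetric) {C r : ℝ}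
    (hr : 0 ≤ r) {x : E} (hx : ∀ n : ℕ, ‖R^[n] x‖ ≤ C * r ^ n) : ‖R x‖ ≤ r * ‖x‖ := by
  refine le_mul_of_sq_le_mul_of_le_mul_pow (u := fun n => ‖R^[n] x‖) (fun n => norm_nonneg _)
    (fun n => ?_) hr hx
  simpa only [Function.iterate_succ_apply'] using norm_apply_sq_le_of_isSymmetric hR (R^[n] x)

theorem re_inner_le_of_abs_re_inner_self_le {R : E →ₗ[𝕜] E} (hR : R.IsSymmetric) {w : ℝ}
    (h : ∀ x, |RCLike.re ⟪R x, x⟫_𝕜| ≤ w * ‖x‖ ^ 2) (x y : E) :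
    RCLike.re ⟪R x, y⟫_𝕜 ≤ w * ((‖x‖ ^ 2 + ‖y‖ ^ 2) / 2) := by
  have hflip : RCLike.re ⟪R y, x⟫_𝕜 = RCLike.re ⟪R x, y⟫_𝕜 :=
    (congrArg RCLike.re (hR y x)).trans (inner_re_symm _ _)
  have hpolar : RCLike.re ⟪R (x + y), x + y⟫_𝕜 - RCLike.re ⟪R (x - y), x - y⟫_𝕜
      = 4 * RCLike.re ⟪R x, y⟫_𝕜 := by
    simp only [map_add, map_sub, inner_add_left, inner_add_right, inner_sub_left, inner_sub_right,
      hflip]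
    ring
  have hpar : w * ‖x + y‖ ^ 2 + w * ‖x - y‖ ^ 2 = w * (2 * (‖x‖ ^ 2 + ‖y‖ ^ 2)) := by
    rw [← mul_add, parallelogram_law_with_norm 𝕜 x y]
  linarith [le_of_abs_le (h (x + y)), neg_le_of_abs_le (h (x - y))]

theorem norm_le_of_abs_re_inner_self_le {R : E →L[𝕜] E} (hR : R.IsSymmetric) {w : ℝ} (hw : 0 ≤ w)
    (h : ∀ x, |RCLike.re ⟪R x, x⟫_𝕜| ≤ w * ‖x‖ ^ 2) : ‖R‖ ≤ w := by
  refine opNorm_le_of_unit_norm hw fun x hx => ?_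
  rcases eq_or_ne ‖R x‖ 0 with h0 | h0
  · rwa [h0]
  set y : E := ((‖R x‖⁻¹ : ℝ) : 𝕜) • R x
  have hy : ‖y‖ = 1 := by simp [y, norm_smul, h0]
  have hxy : RCLike.re ⟪R x, y⟫_𝕜 = ‖R x‖ := by
    rw [inner_smul_right, RCLike.re_ofReal_mul, inner_self_eq_norm_sq, sq, inv_mul_cancel_left₀ h0]
  have hpolar := re_inner_le_of_abs_re_inner_self_le hR h x y
  rw [hx, hy] at hpolar
  calc ‖R x‖ = RCLike.re ⟪R x, y⟫_𝕜 := hxy.symm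
    _ ≤ w := by simpa using hpolar

/- The functional `f y = ‖P y‖ + (r - a) * ‖y‖` comes from the left eigenvector `(1, r - a)` of
`!![a, c; 1, b]`, which bounds the action of `P + Q` on the pair `(‖P y‖, ‖y‖)`; hence `f` grows
along orbits of `P + Q` by a factor of at most `r`. -/
theorem norm_add_le_of_le_sub_mul_sub {P Q : E →L[𝕜] E} (hPQ : (P + Q).IsSymmetric) {a b c r : ℝ}
    (ha : ‖P‖ ≤ a) (hb : ‖Q‖ ≤ b) (hc : ‖P * Q‖ ≤ c) (har : a < r)
    (hr : c ≤ (r - a) * (r - b)) : ‖P + Q‖ ≤ r := by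
  have hr0 : 0 ≤ r := (norm_nonneg P).trans (ha.trans har.le)
  have hra : 0 < r - a := sub_pos.2 har
  let f : E → ℝ := fun y => ‖P y‖ + (r - a) * ‖y‖
  have hstep (y : E) : f ((P + Q) y) ≤ r * f y := by
    have hPy : ‖P ((P + Q) y)‖ ≤ a * ‖P y‖ + c * ‖y‖ := by
      rw [add_apply, map_add]
      exact norm_add_le_of_le (P.le_of_opNorm_le ha _) ((P * Q).le_of_opNorm_le hc y)
    have hy : ‖(P + Q) y‖ ≤ ‖P y‖ + b * ‖y‖ := norm_add_le_of_le le_rfl (Q.le_of_opNorm_le hb y)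
    calc f ((P + Q) y) ≤ a * ‖P y‖ + c * ‖y‖ + (r - a) * (‖P y‖ + b * ‖y‖) := by
          dsimp only [f]; gcongr
      _ ≤ a * ‖P y‖ + (r - a) * (r - b) * ‖y‖ + (r - a) * (‖P y‖ + b * ‖y‖) := by gcongr
      _ = r * f y := by ring
  have hiter (y : E) (n : ℕ) : f ((P + Q)^[n] y) ≤ r ^ n * f y := by
    induction n with
    | zero => simp
    | succ n ih =>
      rw [Function.iterate_succ_apply', pow_succ', mul_assoc]
      exact (hstep _).trans (by gcongr)
  refine opNorm_le_bound _ hr0 fun x =>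
    norm_apply_le_of_norm_iterate_le hPQ (C := f x / (r - a)) hr0 fun n => ?_
  rw [div_mul_eq_mul_div, le_div_iff₀ hra, mul_comm, mul_comm (f x)]
  exact (le_add_of_nonneg_left (norm_nonneg _)).trans (hiter x n)

theorem norm_add_le_half_add_sqrt {P Q : E →L[𝕜] E} (hPQ : (P + Q).IsSymmetric) {a b c : ℝ}
    (ha : ‖P‖ ≤ a) (hb : ‖Q‖ ≤ b) (hc : ‖P * Q‖ ≤ c) :
    ‖P + Q‖ ≤ 1 / 2 * (a + b + √((a - b) ^ 2 + 4 * c)) := by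
  have hc0 : 0 ≤ c := (norm_nonneg _).trans hc
  have hab : a - b ≤ √((a - b) ^ 2 + 4 * c) := Real.le_sqrt_of_sq_le (by linarith)
  refine le_of_forall_gt_imp_ge_of_dense fun r hr => ?_
  have hlt : √((a - b) ^ 2 + 4 * c) < 2 * r - a - b := by linarith
  have hsq : (a - b) ^ 2 + 4 * c < (2 * r - a - b) ^ 2 :=
    (Real.sqrt_lt' ((Real.sqrt_nonneg _).trans_lt hlt)).1 hlt
  exact norm_add_le_of_le_sub_mul_sub hPQ ha hb hc (by linarith) (by linarith)

end Symmetric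

section NumericalRadius

variable {E : Type*} [SeminormedAddCommGroup E] [InnerProductSpace ℂ E]
  {T S Tadj Sadj : E →L[ℂ] E}

/-- The numerical radius `ω(T)` of a bounded operator on a semi-inner product space, written as a
supremum over unit vectors to match `wA`. -/
def numericalRadius (T : E →L[ℂ] E) : ℝ :=
  sSup {c : ℝ | ∃ x : E, ‖x‖ = 1 ∧ c = ‖⟪T x, x⟫_ℂ‖}

/-- The real part `Re(e^{iθ} T)` of a rotated operator. An adjoint need neither exist nor be unique
on a semi-inner product space, so it is passed as the argument `Tadj`, as in `ReA`. -/
def rotatedRe (θ : ℝ) (T Tadj : E →L[ℂ] E) : E →L[ℂ] E :=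
  (2 : ℂ)⁻¹ • (Complex.exp ((θ : ℂ) * Complex.I) • T +
    Complex.exp (-(θ : ℂ) * Complex.I) • Tadj)

theorem numericalRadius_nonneg (T : E →L[ℂ] E) : 0 ≤ numericalRadius T :=
  Real.sSup_nonneg (by rintro _ ⟨x, -, rfl⟩; exact norm_nonneg _)

theorem norm_inner_self_le_numericalRadius (T : E →L[ℂ] E) (x : E) :
    ‖⟪T x, x⟫_ℂ‖ ≤ numericalRadius T * ‖x‖ ^ 2 := by
  rcases eq_or_ne ‖x‖ 0 with h0 | h0
  · simpa [h0] using norm_inner_le_norm (𝕜 := ℂ) (T x) x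
  have hbdd : BddAbove {c : ℝ | ∃ x : E, ‖x‖ = 1 ∧ c = ‖⟪T x, x⟫_ℂ‖} := by
    refine ⟨‖T‖, ?_⟩
    rintro _ ⟨y, hy, rfl⟩
    simpa [hy] using (norm_inner_le_norm (T y) y).trans
      (mul_le_mul_of_nonneg_right (T.le_opNorm y) (norm_nonneg y))
  set y : E := ((‖x‖⁻¹ : ℝ) : ℂ) • x
  have hy : ‖y‖ = 1 := by simp [y, norm_smul, h0]
  have hxy : ‖⟪T y, y⟫_ℂ‖ = ‖⟪T x, x⟫_ℂ‖ / ‖x‖ ^ 2 := by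
    simp only [y, map_smul, inner_smul_left, inner_smul_right, norm_mul, RCLike.norm_conj,
      Complex.norm_real, norm_inv, norm_norm]
    field_simp
  rw [← div_le_iff₀ (by positivity), ← hxy]
  exact le_csSup hbdd ⟨y, hy, rfl⟩

theorem rotatedRe_add (θ : ℝ) (T S Tadj Sadj : E →L[ℂ] E) :
    rotatedRe θ (T + S) (Tadj + Sadj) = rotatedRe θ T Tadj + rotatedRe θ S Sadj := by
  simp only [rotatedRe, smul_add]
  abel

theorem conj_exp_ofReal_mul_I (θ : ℝ) :
    (starRingEnd ℂ) (Complex.exp ((θ : ℂ) * Complex.I)) = Complex.exp (-(θ : ℂ) * Complex.I) := by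
  simp [← Complex.exp_conj]

theorem inner_rotatedRe_left (hT : ∀ x y, ⟪Tadj x, y⟫_ℂ = ⟪x, T y⟫_ℂ) (θ : ℝ) (x y : E) :
    ⟪rotatedRe θ T Tadj x, y⟫_ℂ = 2⁻¹ * (Complex.exp (-(θ : ℂ) * Complex.I) * ⟪T x, y⟫_ℂ +
      (starRingEnd ℂ) (Complex.exp (-(θ : ℂ) * Complex.I) * ⟪T y, x⟫_ℂ)) := by
  simp only [rotatedRe, smul_apply, add_apply, inner_smul_left, inner_add_left, hT, map_mul,
    inner_conj_symm, map_inv₀, Complex.conj_ofNat, conj_exp_ofReal_mul_I]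

theorem isSymmetric_rotatedRe (hT : ∀ x y, ⟪Tadj x, y⟫_ℂ = ⟪x, T y⟫_ℂ) (θ : ℝ) :
    (rotatedRe θ T Tadj).IsSymmetric := fun x y => by
  rw [← inner_conj_symm x]
  simp only [coe_coe, inner_rotatedRe_left hT, map_mul, map_add, Complex.conj_conj, map_inv₀,
    Complex.conj_ofNat]
  ring

theorem re_inner_rotatedRe_self (hT : ∀ x y, ⟪Tadj x, y⟫_ℂ = ⟪x, T y⟫_ℂ) (θ : ℝ) (x : E) :
    (⟪rotatedRe θ T Tadj x, x⟫_ℂ).re = (Complex.exp (-(θ : ℂ) * Complex.I) * ⟪T x, x⟫_ℂ).re := by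
  rw [inner_rotatedRe_left hT, Complex.add_conj]
  simp

theorem norm_rotatedRe_le_numericalRadius (hT : ∀ x y, ⟪Tadj x, y⟫_ℂ = ⟪x, T y⟫_ℂ) (θ : ℝ) :
    ‖rotatedRe θ T Tadj‖ ≤ numericalRadius T := by
  refine norm_le_of_abs_re_inner_self_le (isSymmetric_rotatedRe hT θ) (numericalRadius_nonneg T)
    fun x => ?_
  calc |(⟪rotatedRe θ T Tadj x, x⟫_ℂ).re|
      = |(Complex.exp (-(θ : ℂ) * Complex.I) * ⟪T x, x⟫_ℂ).re| := by
        rw [re_inner_rotatedRe_self hT]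
    _ ≤ ‖Complex.exp (-(θ : ℂ) * Complex.I) * ⟪T x, x⟫_ℂ‖ := Complex.abs_re_le_norm _
    _ = ‖⟪T x, x⟫_ℂ‖ := by
        rw [norm_mul, ← Complex.ofReal_neg, Complex.norm_exp_ofReal_mul_I, one_mul]
    _ ≤ numericalRadius T * ‖x‖ ^ 2 := norm_inner_self_le_numericalRadius T x

theorem exp_neg_arg_mul_I_mul_self (z : ℂ) :
    Complex.exp (-(z.arg : ℂ) * Complex.I) * z = ‖z‖ := by
  nth_rewrite 2 [← Complex.norm_mul_exp_arg_mul_I z]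
  rw [mul_left_comm, ← Complex.exp_add, neg_mul, neg_add_cancel, Complex.exp_zero, mul_one]

theorem numericalRadius_le_of_forall_norm_rotatedRe_le
    (hT : ∀ x y, ⟪Tadj x, y⟫_ℂ = ⟪x, T y⟫_ℂ) {c : ℝ} (h : ∀ θ, ‖rotatedRe θ T Tadj‖ ≤ c) :
    numericalRadius T ≤ c := by
  refine Real.sSup_le ?_ ((norm_nonneg _).trans (h 0))
  rintro _ ⟨x, hx, rfl⟩
  set θ := (⟪T x, x⟫_ℂ).arg
  calc ‖⟪T x, x⟫_ℂ‖ = (⟪rotatedRe θ T Tadj x, x⟫_ℂ).re := by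
        rw [re_inner_rotatedRe_self hT, exp_neg_arg_mul_I_mul_self, Complex.ofReal_re]
    _ ≤ ‖rotatedRe θ T Tadj x‖ * ‖x‖ := re_inner_le_norm (𝕜 := ℂ) _ _
    _ ≤ c := by simpa [hx] using (rotatedRe θ T Tadj).le_of_opNorm_le (h θ) x

theorem norm_rotatedRe_mul_rotatedRe_le (hT : ∀ x y, ⟪Tadj x, y⟫_ℂ = ⟪x, T y⟫_ℂ)
    (hS : ∀ x y, ⟪Sadj x, y⟫_ℂ = ⟪x, S y⟫_ℂ) (θ : ℝ) :
    ‖rotatedRe θ T Tadj * rotatedRe θ S Sadj‖ ≤ numericalRadius T * numericalRadius S :=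
  (norm_mul_le _ _).trans (mul_le_mul (norm_rotatedRe_le_numericalRadius hT θ)
    (norm_rotatedRe_le_numericalRadius hS θ) (norm_nonneg _) (numericalRadius_nonneg T))

theorem numericalRadius_add_le (hT : ∀ x y, ⟪Tadj x, y⟫_ℂ = ⟪x, T y⟫_ℂ)
    (hS : ∀ x y, ⟪Sadj x, y⟫_ℂ = ⟪x, S y⟫_ℂ) :
    numericalRadius (T + S) ≤
      (1 / 2) * (numericalRadius T + numericalRadius S +
        √((numericalRadius T - numericalRadius S) ^ 2 +
          4 * sSup {c : ℝ | ∃ θ : ℝ, c = ‖rotatedRe θ T Tadj * rotatedRe θ S Sadj‖})) := by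
  have hadd : ∀ x y, ⟪(Tadj + Sadj) x, y⟫_ℂ = ⟪x, (T + S) y⟫_ℂ := fun x y => by
    simp only [add_apply, inner_add_left, inner_add_right, hT, hS]
  have hbdd : BddAbove {c : ℝ | ∃ θ : ℝ, c = ‖rotatedRe θ T Tadj * rotatedRe θ S Sadj‖} :=
    ⟨_, by rintro _ ⟨θ, rfl⟩; exact norm_rotatedRe_mul_rotatedRe_le hT hS θ⟩
  refine numericalRadius_le_of_forall_norm_rotatedRe_le hadd fun θ => ?_
  have hsymm := isSymmetric_rotatedRe hadd θ
  rw [rotatedRe_add] at hsymm ⊢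
  exact norm_add_le_half_add_sqrt hsymm (norm_rotatedRe_le_numericalRadius hT θ)
    (norm_rotatedRe_le_numericalRadius hS θ) (le_csSup hbdd ⟨θ, rfl⟩)

theorem half_add_sqrt_le_numericalRadius_add (hT : ∀ x y, ⟪Tadj x, y⟫_ℂ = ⟪x, T y⟫_ℂ)
    (hS : ∀ x y, ⟪Sadj x, y⟫_ℂ = ⟪x, S y⟫_ℂ) :
    (1 / 2) * (numericalRadius T + numericalRadius S +
        √((numericalRadius T - numericalRadius S) ^ 2 +
          4 * sSup {c : ℝ | ∃ θ : ℝ, c = ‖rotatedRe θ T Tadj * rotatedRe θ S Sadj‖})) ≤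
      numericalRadius T + numericalRadius S := by
  have hsup : sSup {c : ℝ | ∃ θ : ℝ, c = ‖rotatedRe θ T Tadj * rotatedRe θ S Sadj‖} ≤
      numericalRadius T * numericalRadius S :=
    csSup_le ⟨_, 0, rfl⟩ (by rintro _ ⟨θ, rfl⟩; exact norm_rotatedRe_mul_rotatedRe_le hT hS θ)
  have hsqrt : √((numericalRadius T - numericalRadius S) ^ 2 +
        4 * sSup {c : ℝ | ∃ θ : ℝ, c = ‖rotatedRe θ T Tadj * rotatedRe θ S Sadj‖}) ≤
      numericalRadius T + numericalRadius S :=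
    Real.sqrt_le_iff.2 ⟨add_nonneg (numericalRadius_nonneg T) (numericalRadius_nonneg S),
      by linarith⟩
  linarith

end NumericalRadius

section SemiHilbert

variable {V : Type*} [NormedAddCommGroup V] [InnerProductSpace ℂ V] {A : V →L[ℂ] V}

theorem innA_add_left (A : V →L[ℂ] V) (x y z : V) :
    innA A (x + y) z = innA A x z + innA A y z := by
  simp only [innA, map_add, inner_add_left]

theorem innA_smul_left (A : V →L[ℂ] V) (x y : V) (c : ℂ) :
    innA A (c • x) y = (starRingEnd ℂ) c * innA A x y := by
  simp only [innA, map_smul, inner_smul_left]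

theorem innA_conj_symm (hA : A.IsPositive) (x y : V) :
    (starRingEnd ℂ) (innA A y x) = innA A x y :=
  (inner_conj_symm _ _).trans (hA.isSymmetric x y).symm

theorem innA_apply_left_comm (hA : A.IsPositive) {T X : V →L[ℂ] V}
    (hT : ∀ x y, innA A (X x) y = innA A x (T y)) (x y : V) :
    innA A (T x) y = innA A x (X y) :=
  calc innA A (T x) y = (starRingEnd ℂ) (innA A y (T x)) := (innA_conj_symm hA _ _).symm
    _ = (starRingEnd ℂ) (innA A (X y) x) := by rw [hT]
    _ = innA A x (X y) := innA_conj_symm hA _ _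

theorem vnormA_nonneg (A : V →L[ℂ] V) (x : V) : 0 ≤ vnormA A x :=
  Real.sqrt_nonneg _

theorem vnormA_le (A : V →L[ℂ] V) (x : V) : vnormA A x ≤ √‖A‖ * ‖x‖ := by
  rw [← Real.sqrt_sq (norm_nonneg x), ← Real.sqrt_mul (norm_nonneg A), sq, ← mul_assoc]
  exact Real.sqrt_le_sqrt ((re_inner_le_norm (𝕜 := ℂ) _ _).trans (by gcongr; exact A.le_opNorm x))

/-- The semi-Hilbert space `(V, ⟨·, ·⟩_A)`: a type synonym of `V` that carries the inner product
`innA A` and the seminorm `vnormA A`. The positivity proof is an argument of the type so that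
these instances can find it. -/
def SemiHilbert (_hA : A.IsPositive) : Type _ := V

namespace SemiHilbert

variable (hA : A.IsPositive)

instance : AddCommGroup (SemiHilbert hA) := inferInstanceAs (AddCommGroup V)

instance : Module ℂ (SemiHilbert hA) := inferInstanceAs (Module ℂ V)

/-- The semi-inner product `innA A` as the structure from which Mathlib builds the seminorm and
the topology of `SemiHilbert hA`. -/
abbrev preInnerProductCore : PreInnerProductSpace.Core ℂ (SemiHilbert hA) where
  inner := innA (H := V) A
  conj_inner_symm := innA_conj_symm (V := V) hA
  re_inner_nonneg := hA.re_inner_nonneg_left (E := V)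
  add_left := innA_add_left (V := V) A
  smul_left := innA_smul_left (V := V) A

instance : SeminormedAddCommGroup (SemiHilbert hA) :=
  InnerProductSpace.Core.toSeminormedAddCommGroup (c := preInnerProductCore hA)

instance : InnerProductSpace ℂ (SemiHilbert hA) :=
  InnerProductSpace.ofCore (preInnerProductCore hA)

variable {T X : V →L[ℂ] V}

theorem vnormA_apply_le_of_symmetric (hA : A.IsPositive) {R : V →L[ℂ] V}
    (hR : ∀ x y, innA A (R x) y = innA A x (R y)) (x : V) :
    vnormA A (R x) ≤ ‖R‖ * vnormA A x := by
  let R' : SemiHilbert hA →ₗ[ℂ] SemiHilbert hA := (R : V →ₗ[ℂ] V)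
  refine norm_apply_le_of_norm_iterate_le (R := R') hR (C := √‖A‖ * ‖x‖) (norm_nonneg R)
    fun n => ?_
  calc vnormA A (R^[n] x) ≤ √‖A‖ * ‖R^[n] x‖ := vnormA_le A _
    _ ≤ √‖A‖ * (‖R‖ ^ n * ‖x‖) := by
      gcongr
      exact (R.lipschitz.iterate n).norm_le_mul (iterate_map_zero R n) x
    _ = √‖A‖ * ‖x‖ * ‖R‖ ^ n := by ring

theorem vnormA_apply_le (hA : A.IsPositive) (hT : ∀ x y, innA A (X x) y = innA A x (T y))
    (x : V) : vnormA A (T x) ≤ √‖X * T‖ * vnormA A x := by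
  have hsymm : vnormA A ((X * T) x) ≤ ‖X * T‖ * vnormA A x :=
    vnormA_apply_le_of_symmetric hA (fun x y => by
      rw [mul_apply_eq_comp, mul_apply_eq_comp, hT, innA_apply_left_comm hA hT]) x
  have hcs : (innA A ((X * T) x) x).re ≤ vnormA A ((X * T) x) * vnormA A x :=
    re_inner_le_norm (𝕜 := ℂ) (E := SemiHilbert hA) _ _
  refine (Real.sqrt_le_sqrt (y := ‖X * T‖ * vnormA A x ^ 2) ?_).trans_eq ?_
  · calc (innA A (T x) (T x)).re = (innA A ((X * T) x) x).re :=
          congrArg Complex.re (hT (T x) x).symm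
      _ ≤ vnormA A ((X * T) x) * vnormA A x := hcs
      _ ≤ ‖X * T‖ * vnormA A x * vnormA A x := by gcongr; exact vnormA_nonneg A x
      _ = ‖X * T‖ * vnormA A x ^ 2 := by ring
  · rw [Real.sqrt_mul (norm_nonneg _), Real.sqrt_sq (vnormA_nonneg A x)]

/-- An operator that has an `A`-adjoint, as a bounded operator on `SemiHilbert hA`. -/
def lift (hT : ∀ x y, innA A (X x) y = innA A x (T y)) : SemiHilbert hA →L[ℂ] SemiHilbert hA :=
  LinearMap.mkContinuous (T : V →ₗ[ℂ] V) (√‖X * T‖) (vnormA_apply_le (V := V) hA hT)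

theorem opNormA_eq_norm_of_apply_eq {F : V →L[ℂ] V} {G : SemiHilbert hA →L[ℂ] SemiHilbert hA}
    (h : ∀ x : V, G x = F x) : opNormA A F = ‖G‖ := by
  have hle : ‖G‖ ∈ upperBounds {c : ℝ | ∃ x : V, vnormA A x = 1 ∧ c = vnormA A (F x)} := by
    rintro _ ⟨x, hx, rfl⟩
    rw [← h]
    exact G.unit_le_opNorm x hx.le
  refine le_antisymm (Real.sSup_le hle (norm_nonneg G)) (opNorm_le_of_unit_norm ?_ fun x hx => ?_)
  · exact Real.sSup_nonneg (by rintro _ ⟨x, -, rfl⟩; exact vnormA_nonneg A _)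
  · exact le_csSup ⟨‖G‖, hle⟩ ⟨x, hx, congrArg (vnormA A) (h x)⟩

end SemiHilbert

end SemiHilbert

theorem innA_apply_left_of_comp_eq {A T X : H →L[ℂ] H} (h : A ∘L X = adjoint T ∘L A) (x y : H) :
    innA A (X x) y = innA A x (T y) := by
  rw [innA, innA, ← adjoint_inner_left]
  exact congrArg (inner ℂ · y) (DFunLike.congr_fun h x)

theorem stmt8_general {V : Type*} [NormedAddCommGroup V] [InnerProductSpace ℂ V] {A : V →L[ℂ] V}
    (hA : A.IsPositive) {T S Tadj Sadj : V →L[ℂ] V}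
    (hT : ∀ x y, innA A (Tadj x) y = innA A x (T y))
    (hS : ∀ x y, innA A (Sadj x) y = innA A x (S y)) :
    wA A (T + S) ≤
      (1 / 2) * (wA A T + wA A S +
        √((wA A T - wA A S) ^ 2 +
          4 * sSup {c : ℝ | ∃ θ : ℝ, c = opNormA A (ReA θ T Tadj * ReA θ S Sadj)})) ∧
    (1 / 2) * (wA A T + wA A S +
        √((wA A T - wA A S) ^ 2 +
          4 * sSup {c : ℝ | ∃ θ : ℝ, c = opNormA A (ReA θ T Tadj * ReA θ S Sadj)})) ≤
      wA A T + wA A S := by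
  let T' := SemiHilbert.lift hA hT
  let S' := SemiHilbert.lift hA hS
  let Tadj' := SemiHilbert.lift hA (innA_apply_left_comm hA hT)
  let Sadj' := SemiHilbert.lift hA (innA_apply_left_comm hA hS)
  have hnorm (θ : ℝ) : opNormA A (ReA θ T Tadj * ReA θ S Sadj) =
      ‖rotatedRe θ T' Tadj' * rotatedRe θ S' Sadj'‖ :=
    SemiHilbert.opNormA_eq_norm_of_apply_eq hA fun _ => rfl
  simp only [hnorm]
  exact ⟨numericalRadius_add_le (T := T') (S := S') hT hS,
    half_add_sqrt_le_numericalRadius_add (T := T') (S := S') hT hS⟩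

theorem stmt8 (A : H →L[ℂ] H) (hA : A.IsPositive) (hA0 : A ≠ 0)
    (T S Tsharp Ssharp : H →L[ℂ] H)
    (hT : IsReducedAAdjoint A T Tsharp) (hS : IsReducedAAdjoint A S Ssharp) :
    wA A (T + S) ≤
      (1 / 2) * (wA A T + wA A S +
        Real.sqrt ((wA A T - wA A S) ^ 2 +
          4 * sSup {c : ℝ | ∃ θ : ℝ,
            c = opNormA A (ReA θ T Tsharp * ReA θ S Ssharp)})) ∧
    (1 / 2) * (wA A T + wA A S +
        Real.sqrt ((wA A T - wA A S) ^ 2 +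
          4 * sSup {c : ℝ | ∃ θ : ℝ,
            c = opNormA A (ReA θ T Tsharp * ReA θ S Ssharp)})) ≤
      wA A T + wA A S := by
  exact stmt8_general hA (innA_apply_left_of_comp_eq hT.1) (innA_apply_left_of_comp_eq hS.1)
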